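/- There is a universal constant C > 0 such that the following holds. Fix k with 1 ≤ k ≤ N and suppose that for every u ∈ [t_{k−1}, t_k] the density p_u is C¹ with ∇log p_u L-Lipschitz on ℝ^d, where L ≥ 1 and G_k ≤ 1. Then for every t ∈ [t_{k−1}, t_k], E‖∇log p_t(x_t) − ∇log p_{t_k}(x_{t_k})‖² ≤ C·d·L²·G_{t,t_k}, where the expectation is over the joint forward coupling of (x_t, x_{t_k}). -/

import Mathlib

open MeasureTheory Real

noncomputable section

namespace DiffusionKL

/-- Euclidean space `ℝ^d`. -/
abbrev Vec (d : ℕ) := EuclideanSpace ℝ (Fin d)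

/-- Density of the isotropic Gaussian `N(m, v·I_d)` on `ℝ^d`. -/
def gaussDensity (d : ℕ) (m : Vec d) (v : ℝ) (x : Vec d) : ℝ :=
  (2 * π * v) ^ (-(d : ℝ) / 2) * Real.exp (-‖x - m‖ ^ 2 / (2 * v))

/-- The isotropic Gaussian measure `N(m, v·I_d)` on `ℝ^d`. -/
def gaussMeasure (d : ℕ) (m : Vec d) (v : ℝ) : Measure (Vec d) :=
  MeasureTheory.volume.withDensity (fun x => ENNReal.ofReal (gaussDensity d m v x))

/-- The standard Gaussian measure `γ_d = N(0, I_d)` on `ℝ^d`. -/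
def stdGauss (d : ℕ) : Measure (Vec d) := gaussMeasure d 0 1

/-- Kullback-Leibler divergence `KL(μ ‖ ν) = ∫ log (dμ/dν) dμ`. -/
def KLdiv {d : ℕ} (μ ν : Measure (Vec d)) : ℝ :=
  ∫ x, Real.log ((μ.rnDeriv ν x).toReal) ∂μ

/-- `G_{t,s} = ∫_t^s g(u)² du`. -/
def Gvar (g : ℝ → ℝ) (t s : ℝ) : ℝ := ∫ u in t..s, (g u) ^ 2

/-- `α_{t,s} = exp(−G_{t,s}/2)`. -/
def alphaF (g : ℝ → ℝ) (t s : ℝ) : ℝ := Real.exp (-(Gvar g t s) / 2)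

/-- `σ_t² = 1 − exp(−G_t)`. -/
def sigmaSq (g : ℝ → ℝ) (t : ℝ) : ℝ := 1 - Real.exp (-(Gvar g 0 t))

/-- The law of the forward marginal `x_t = α_t X₀ + σ_t Z`, `X₀ ∼ P`, `Z ∼ N(0,I_d)` indep. -/
def forwardLaw (d : ℕ) (P : Measure (Vec d)) (g : ℝ → ℝ) (t : ℝ) : Measure (Vec d) :=
  Measure.map (fun q : Vec d × Vec d => alphaF g 0 t • q.1 + Real.sqrt (sigmaSq g t) • q.2)
    (P.prod (stdGauss d))

/-- Explicit density of the forward marginal `p_t` (for `t > 0`). -/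
def forwardDensity (d : ℕ) (P : Measure (Vec d)) (g : ℝ → ℝ) (t : ℝ) (x : Vec d) : ℝ :=
  (2 * π * sigmaSq g t) ^ (-(d : ℝ) / 2) *
    ∫ y, Real.exp (-‖x - alphaF g 0 t • y‖ ^ 2 / (2 * sigmaSq g t)) ∂P

/-- Score function `∇ log p` of a density `p`. -/
def scoreOf {d : ℕ} (p : Vec d → ℝ) (x : Vec d) : Vec d :=
  gradient (fun z => Real.log (p z)) x

/-- Score `∇ log p_t` of the forward marginal at time `t > 0`. -/
def fwdScore (d : ℕ) (P : Measure (Vec d)) (g : ℝ → ℝ) (t : ℝ) : Vec d → Vec d :=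
  scoreOf (forwardDensity d P g t)

/-- Underlying measure for the joint forward coupling: `ω = (X₀, Z, Z')`. -/
def coupleMeasure (d : ℕ) (P : Measure (Vec d)) : Measure (Vec d × Vec d × Vec d) :=
  P.prod ((stdGauss d).prod (stdGauss d))

/-- The forward process at time `t`: `x_t(ω) = α_t X₀ + σ_t Z`. -/
def xt (d : ℕ) (g : ℝ → ℝ) (t : ℝ) (ω : Vec d × Vec d × Vec d) : Vec d :=
  alphaF g 0 t • ω.1 + Real.sqrt (sigmaSq g t) • ω.2.1

/-- The forward process at time `s ≥ t`, coupled with `x_t` by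
`x_s = α_{t,s} x_t + √(1−α_{t,s}²) Z'`. -/
def xts (d : ℕ) (g : ℝ → ℝ) (t s : ℝ) (ω : Vec d × Vec d × Vec d) : Vec d :=
  alphaF g t s • xt d g t ω + Real.sqrt (1 - (alphaF g t s) ^ 2) • ω.2.2

/-- Law of a Markov chain after `n` steps, started at `init`, with transition kernels `κ`. -/
def chainLaw (d : ℕ) (init : Measure (Vec d)) (κ : ℕ → Vec d → Measure (Vec d)) :
    ℕ → Measure (Vec d)
  | 0 => init
  | k + 1 => (chainLaw d init κ k).bind (κ k)

/-- One step of the exponential-integrator sampler: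
`ŷ_{k+1} | ŷ_k = a ∼ N(e^{G_{N−k}/2}·a + 2(e^{G_{N−k}/2} − 1)·s(a,t_{N−k}), (e^{G_{N−k}} − 1)·I_d)`. -/
def EIstep (d N : ℕ) (tp : ℕ → ℝ) (g : ℝ → ℝ) (sc : Vec d → ℝ → Vec d) (k : ℕ) (a : Vec d) :
    Measure (Vec d) :=
  gaussMeasure d
    (Real.exp (Gvar g (tp (N - k - 1)) (tp (N - k)) / 2) • a +
      (2 * (Real.exp (Gvar g (tp (N - k - 1)) (tp (N - k)) / 2) - 1)) • sc a (tp (N - k)))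
    (Real.exp (Gvar g (tp (N - k - 1)) (tp (N - k))) - 1)

/-- One step of the Euler–Maruyama sampler:
`ŷ_{k+1} | ŷ_k = a ∼ N((1 + G_{N−k}/2)·a + G_{N−k}·s(a,t_{N−k}), G_{N−k}·I_d)`. -/
def EMstep (d N : ℕ) (tp : ℕ → ℝ) (g : ℝ → ℝ) (sc : Vec d → ℝ → Vec d) (k : ℕ) (a : Vec d) :
    Measure (Vec d) :=
  gaussMeasure d
    ((1 + Gvar g (tp (N - k - 1)) (tp (N - k)) / 2) • a +
      (Gvar g (tp (N - k - 1)) (tp (N - k))) • sc a (tp (N - k)))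
    (Gvar g (tp (N - k - 1)) (tp (N - k)))

/-- Terminal law of the exponential-integrator sampler started at `N(0,I_d)`. -/
def EIlaw (d N : ℕ) (tp : ℕ → ℝ) (g : ℝ → ℝ) (sc : Vec d → ℝ → Vec d) : Measure (Vec d) :=
  chainLaw d (stdGauss d) (EIstep d N tp g sc) N

/-- Terminal law of the Euler–Maruyama sampler started at `N(0,I_d)`. -/
def EMlaw (d N : ℕ) (tp : ℕ → ℝ) (g : ℝ → ℝ) (sc : Vec d → ℝ → Vec d) : Measure (Vec d) :=
  chainLaw d (stdGauss d) (EMstep d N tp g sc) N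

/-- The weighted L² score estimation error
`(1/G_T)·Σ_{k=1}^N G_k·E_{p_{t_k}} ‖∇log p_{t_k}(x) − s(x,t_k)‖²`. -/
def scoreErr (d N : ℕ) (P : Measure (Vec d)) (g : ℝ → ℝ) (tp : ℕ → ℝ)
    (sc : Vec d → ℝ → Vec d) : ℝ :=
  (1 / Gvar g 0 (tp N)) * ∑ k ∈ Finset.range N,
    Gvar g (tp k) (tp (k + 1)) *
      ∫ x, ‖fwdScore d P g (tp (k + 1)) x - sc x (tp (k + 1))‖ ^ 2
        ∂(forwardLaw d P g (tp (k + 1)))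

/-- Entry `(i,j)` of the Hessian matrix `∇²f(x)`. -/
def hessEntry {d : ℕ} (f : Vec d → ℝ) (x : Vec d) (i j : Fin d) : ℝ :=
  fderiv ℝ (fun y => fderiv ℝ f y (EuclideanSpace.single j 1)) x (EuclideanSpace.single i 1)

/-- Frobenius norm of the Hessian matrix `∇²f(x)`. -/
def hessFrob {d : ℕ} (f : Vec d → ℝ) (x : Vec d) : ℝ :=
  Real.sqrt (∑ i, ∑ j, (hessEntry f x i j) ^ 2)

/-- Density of the Gaussian perturbation `X + σZ`, `X ∼ P`, `Z ∼ N(0,I_d)`. -/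
def perturbDensity (d : ℕ) (P : Measure (Vec d)) (σ : ℝ) (x : Vec d) : ℝ :=
  (2 * π * σ ^ 2) ^ (-(d : ℝ) / 2) * ∫ y, Real.exp (-‖x - y‖ ^ 2 / (2 * σ ^ 2)) ∂P

/-- Density of `μY + σZ`, `Y ∼ P`, `Z ∼ N(0,I_d)`. -/
def perturbDensity' (d : ℕ) (P : Measure (Vec d)) (μ σ : ℝ) (x : Vec d) : ℝ :=
  (2 * π * σ ^ 2) ^ (-(d : ℝ) / 2) * ∫ y, Real.exp (-‖x - μ • y‖ ^ 2 / (2 * σ ^ 2)) ∂P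

/-- Law of the Gaussian perturbation `X + σZ`. -/
def perturbLaw (d : ℕ) (P : Measure (Vec d)) (σ : ℝ) : Measure (Vec d) :=
  Measure.map (fun q : Vec d × Vec d => q.1 + σ • q.2)
    (P.prod (MeasureTheory.volume.withDensity
      (fun x : Vec d => ENNReal.ofReal ((2 * π) ^ (-(d : ℝ) / 2) * Real.exp (-‖x‖ ^ 2 / 2)))))

/-- The tilted conditional measure `dP̃_{μ,σ}(y|x) ∝ exp(−‖x−μy‖²/(2σ²)) dP(y)`. -/
def tiltMeasure (d : ℕ) (P : Measure (Vec d)) (μ σ : ℝ) (x : Vec d) : Measure (Vec d) :=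
  ((P.withDensity (fun y => ENNReal.ofReal (Real.exp (-‖x - μ • y‖ ^ 2 / (2 * σ ^ 2))))) Set.univ)⁻¹ •
    P.withDensity (fun y => ENNReal.ofReal (Real.exp (-‖x - μ • y‖ ^ 2 / (2 * σ ^ 2))))

/-- Sub-exponential (ψ₁-Orlicz) norm of `f` under the measure `μ`. -/
def psi1Norm {α : Type*} [MeasurableSpace α] (μ : Measure α) (f : α → ℝ) : ℝ :=
  sInf {t : ℝ | 0 < t ∧ ∫ x, Real.exp (|f x| / t) ∂μ ≤ 2}

/-- Sub-Gaussian (ψ₂-Orlicz) norm of `f` under the measure `μ`. -/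
def psi2Norm {α : Type*} [MeasurableSpace α] (μ : Measure α) (f : α → ℝ) : ℝ :=
  sInf {t : ℝ | 0 < t ∧ ∫ x, Real.exp ((f x) ^ 2 / t ^ 2) ∂μ ≤ 2}

/-!
Write `X = x_t` and `Y = x_s = a X + b W`, with log-densities `φ` and `ψ` whose gradients are
`K`-Lipschitz. Translating the input by `v` translates the output by `a v`; to first order in `v`
this says that `∇ φ(X) - a ∇ ψ(Y)` is orthogonal to every square-integrable function of `Y`. Hence
`∇ ψ(Y)` may be replaced, at the cost of a multiple `1 - a` of itself, by any other function of `Y`,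
for which we take `∇ φ(Y / a)`: it differs from `∇ φ(X)` by at most `K |b / a| ‖W‖`, since
`Y / a - X = (b / a) W`.

The remaining term `E ‖∇ ψ(Y)‖²` is controlled by the smoothness of `ψ` alone: comparing `ψ(Y + v)`
with its linearization and using `E exp(ψ(Y + v) - ψ(Y)) = 1` shows that `⟪∇ ψ(Y), v⟫` is
sub-Gaussian with variance proxy `K ‖v‖²`, so that `E ‖∇ ψ(Y)‖² ≤ d K`.
-/

section Potential

open scoped Gradient RealInnerProductSpace NNReal

variable {E : Type*} [NormedAddCommGroup E] [InnerProductSpace ℝ E] [CompleteSpace E]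

lemma hasDerivAt_comp_line {φ : E → ℝ} {x v : E} {r : ℝ} (hφ : DifferentiableAt ℝ φ (x + r • v)) :
    HasDerivAt (fun r : ℝ => φ (x + r • v)) ⟪∇ φ (x + r • v), v⟫ r := by
  have hline : HasDerivAt (fun r : ℝ => x + r • v) v r := by
    simpa using ((hasDerivAt_id r).smul_const v).const_add x
  exact hφ.hasGradientAt.hasFDerivAt.comp_hasDerivAt r hline

lemma abs_sub_sub_inner_gradient_le {φ : E → ℝ} {K : ℝ≥0} (hφ : Differentiable ℝ φ)
    (hK : LipschitzWith K (∇ φ)) (x v : E) :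
    |φ (x + v) - φ x - ⟪∇ φ x, v⟫| ≤ K * ‖v‖ ^ 2 / 2 := by
  have hderiv (r : ℝ) : HasDerivAt (fun r : ℝ => φ (x + r • v) - φ x - r * ⟪∇ φ x, v⟫)
      (⟪∇ φ (x + r • v), v⟫ - ⟪∇ φ x, v⟫) r := by
    simpa using ((hasDerivAt_comp_line (hφ _)).sub_const _).fun_sub
      ((hasDerivAt_id r).mul_const ⟪∇ φ x, v⟫)
  have hbound (r : ℝ) (hr : 0 ≤ r) :
      ‖⟪∇ φ (x + r • v), v⟫ - ⟪∇ φ x, v⟫‖ ≤ K * ‖v‖ ^ 2 * r :=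
    calc ‖⟪∇ φ (x + r • v), v⟫ - ⟪∇ φ x, v⟫‖
        ≤ ‖∇ φ (x + r • v) - ∇ φ x‖ * ‖v‖ := by
          rw [← inner_sub_left]; exact norm_inner_le_norm _ _
      _ ≤ K * ‖r • v‖ * ‖v‖ := by
          gcongr; simpa using hK.norm_sub_le (x + r • v) x
      _ = K * ‖v‖ ^ 2 * r := by rw [norm_smul, Real.norm_of_nonneg hr]; ring
  have hB (r : ℝ) : HasDerivAt (fun r : ℝ => K * ‖v‖ ^ 2 * r ^ 2 / 2) (K * ‖v‖ ^ 2 * r) r :=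
    (((hasDerivAt_pow 2 r).const_mul (K * ‖v‖ ^ 2 : ℝ)).div_const 2).congr_deriv
      (by push_cast; ring)
  simpa using image_norm_le_of_norm_deriv_right_le_deriv_boundary
    (fun r _ => (hderiv r).continuousAt.continuousWithinAt)
    (fun r _ => (hderiv r).hasDerivWithinAt) (by simp) hB
    (fun r hr => hbound r hr.1) (Set.right_mem_Icc.2 zero_le_one)

lemma abs_exp_sub_mul_inner_gradient_le {φ : E → ℝ} {K : ℝ≥0} (hφ : Differentiable ℝ φ)
    (hK : LipschitzWith K (∇ φ)) (x v : E) {r : ℝ} (hr : |r| ≤ 1) :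
    |exp (φ (x + r • v) - φ x) * ⟪∇ φ (x + r • v), v⟫| ≤
      exp (2 * (|⟪∇ φ x, v⟫| + K * ‖v‖ ^ 2)) := by
  set b := |⟪∇ φ x, v⟫| + K * ‖v‖ ^ 2
  have hdiff : φ (x + r • v) - φ x ≤ b := by
    have hsmooth := le_of_abs_le (abs_sub_sub_inner_gradient_le hφ hK x (r • v))
    rw [real_inner_smul_right, norm_smul, mul_pow, norm_eq_abs] at hsmooth
    have hinner : r * ⟪∇ φ x, v⟫ ≤ |⟪∇ φ x, v⟫| :=
      (le_abs_self _).trans (abs_mul r _ ▸ mul_le_of_le_one_left (abs_nonneg _) hr)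
    have hquad : K * (|r| ^ 2 * ‖v‖ ^ 2) ≤ K * ‖v‖ ^ 2 := by
      gcongr
      exact mul_le_of_le_one_left (sq_nonneg _) (pow_le_one₀ (abs_nonneg _) hr)
    have : 0 ≤ K * ‖v‖ ^ 2 := by positivity
    linarith
  have hscore : |⟪∇ φ (x + r • v), v⟫| ≤ b :=
    calc |⟪∇ φ (x + r • v), v⟫| = |⟪∇ φ x, v⟫ + ⟪∇ φ (x + r • v) - ∇ φ x, v⟫| := by
          rw [← inner_add_left, add_sub_cancel]
      _ ≤ |⟪∇ φ x, v⟫| + ‖∇ φ (x + r • v) - ∇ φ x‖ * ‖v‖ :=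
          (abs_add_le _ _).trans (add_le_add_right (abs_real_inner_le_norm _ _) _)
      _ ≤ |⟪∇ φ x, v⟫| + K * ‖v‖ * ‖v‖ := by
          gcongr
          have hlip := hK.norm_sub_le (x + r • v) x
          rw [add_sub_cancel_left, norm_smul] at hlip
          exact hlip.trans (by gcongr; exact mul_le_of_le_one_left (norm_nonneg _) hr)
      _ = b := by simp only [b]; ring
  calc |exp (φ (x + r • v) - φ x) * ⟪∇ φ (x + r • v), v⟫|
      = exp (φ (x + r • v) - φ x) * |⟪∇ φ (x + r • v), v⟫| := by rw [abs_mul, abs_exp]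
    _ ≤ exp b * exp b := by
        gcongr
        exact hscore.trans (by linarith [add_one_le_exp b])
    _ = exp (2 * b) := by rw [← exp_add, two_mul]

lemma gradient_log {p : E → ℝ} {x : E} (hp : DifferentiableAt ℝ p x) (hx : p x ≠ 0) :
    ∇ (fun z => Real.log (p z)) x = (p x)⁻¹ • ∇ p x := by
  simp [gradient, fderiv.log hp hx]

lemma pos_of_continuous_gradient_log {p : E → ℝ} (hp : Differentiable ℝ p)
    (hs : Continuous (∇ fun z => Real.log (p z))) {x : E} (hx : 0 < p x) (y : E) : 0 < p y := by
  set s := ∇ fun z => Real.log (p z)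
  set v := y - x
  obtain ⟨M, hM⟩ := isCompact_Icc.exists_bound_of_continuousOn (s := Set.Icc (0 : ℝ) 1)
    (f := fun r => ⟪s (x + r • v), v⟫) (by fun_prop)
  have hbarrier (r : ℝ) : HasDerivAt (fun r => p x * exp (-(M + 1) * r))
      (p x * exp (-(M + 1) * r) * -(M + 1)) r := by
    simpa [mul_assoc] using ((hasDerivAt_id r).const_mul (-(M + 1))).exp.const_mul (p x)
  have hline (r : ℝ) : HasDerivAt (fun r : ℝ => p (x + r • v)) ⟪∇ p (x + r • v), v⟫ r :=
    hasDerivAt_comp_line (hp _)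
  have hle : p x * exp (-(M + 1) * 1) ≤ p (x + (1 : ℝ) • v) := by
    refine image_le_of_deriv_right_lt_deriv_boundary
      (fun r _ => (hbarrier r).continuousAt.continuousWithinAt)
      (fun r _ => (hbarrier r).hasDerivWithinAt) (by simp) hline (fun r hr htouch => ?_)
      (Set.right_mem_Icc.2 zero_le_one)
    have hpos : 0 < p (x + r • v) := htouch ▸ by positivity
    have hgrad : ∇ p (x + r • v) = p (x + r • v) • s (x + r • v) := by
      simp only [s, gradient_log (hp _) hpos.ne', smul_inv_smul₀ hpos.ne']
    rw [htouch, hgrad, real_inner_smul_left]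
    gcongr
    linarith [neg_le_of_abs_le (hM r (Set.Ico_subset_Icc_self hr))]
  calc 0 < p x * exp (-(M + 1) * 1) := by positivity
    _ ≤ p y := by simpa [v] using hle

end Potential

section SubGaussian

open ProbabilityTheory
open scoped RealInnerProductSpace NNReal

variable {Ω : Type*} [MeasurableSpace Ω] {ρ : Measure Ω}

lemma one_add_sq_div_two_le_cosh (u : ℝ) : 1 + u ^ 2 / 2 ≤ cosh u := by
  have hhalf : (u / 2) ^ 2 ≤ sinh (u / 2) ^ 2 := by
    rw [sq_le_sq, abs_sinh]
    exact self_le_sinh_iff.2 (abs_nonneg _)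
  calc 1 + u ^ 2 / 2 = 1 + 2 * (u / 2) ^ 2 := by ring
    _ ≤ 1 + 2 * sinh (u / 2) ^ 2 := by gcongr
    _ = cosh (2 * (u / 2)) := by rw [cosh_two_mul, cosh_sq']; ring
    _ = cosh u := by rw [mul_div_cancel₀ u two_ne_zero]

lemma mul_integral_sq_le_of_hasSubgaussianMGF [IsProbabilityMeasure ρ] {X : Ω → ℝ} {c : ℝ≥0}
    (h : HasSubgaussianMGF X c ρ) (t : ℝ) :
    t ^ 2 * ∫ ω, X ω ^ 2 ∂ρ ≤ 2 * (exp (c * t ^ 2 / 2) - 1) := by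
  have hX : Integrable (fun ω => X ω ^ 2) ρ := (h.memLp 2).integrable_sq
  have hle : ∫ ω, (1 + t ^ 2 / 2 * X ω ^ 2) ∂ρ ≤ (mgf X ρ t + mgf X ρ (-t)) / 2 := by
    rw [mgf, mgf, ← integral_add (h.integrable_exp_mul t) (h.integrable_exp_mul (-t)),
      ← integral_div]
    refine integral_mono ((integrable_const _).add (hX.const_mul _))
      (((h.integrable_exp_mul t).add (h.integrable_exp_mul (-t))).div_const 2) fun ω => ?_
    have := one_add_sq_div_two_le_cosh (t * X ω)
    rw [cosh_eq, ← neg_mul] at this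
    linarith [mul_pow t (X ω) 2]
  rw [integral_add (integrable_const _) (hX.const_mul _), integral_const_mul] at hle
  have hneg := h.mgf_le (-t)
  rw [neg_sq] at hneg
  simp only [integral_const, probReal_univ, one_smul] at hle
  linarith [h.mgf_le t]

lemma integral_sq_le_of_hasSubgaussianMGF [IsProbabilityMeasure ρ] {X : Ω → ℝ} {c : ℝ≥0}
    (h : HasSubgaussianMGF X c ρ) : ∫ ω, X ω ^ 2 ∂ρ ≤ c := by
  have hderiv : HasDerivAt (fun τ : ℝ => 2 * exp (c * τ / 2)) c 0 :=
    ((((hasDerivAt_id (0 : ℝ)).const_mul (c : ℝ)).div_const 2).exp.const_mul 2).congr_deriv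
      (by simp; ring)
  refine ge_of_tendsto hderiv.tendsto_slope_zero_right ?_
  filter_upwards [self_mem_nhdsWithin] with τ hτ
  have hle := mul_integral_sq_le_of_hasSubgaussianMGF h √τ
  rw [sq_sqrt (Set.mem_Ioi.1 hτ).le] at hle
  rw [smul_eq_mul, le_inv_mul_iff₀ hτ]
  simpa [mul_sub] using hle

variable {E : Type*} [NormedAddCommGroup E] [InnerProductSpace ℝ E] [FiniteDimensional ℝ E]
  {f : Ω → E}

lemma memLp_of_forall_memLp_inner {p : ENNReal}
    (hf : ∀ v, MemLp (fun ω => ⟪f ω, v⟫) p ρ) : MemLp f p ρ := by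
  let b := stdOrthonormalBasis ℝ E
  have hsum : f = fun ω => ∑ i, ⟪f ω, b i⟫ • b i :=
    funext fun ω => (b.sum_repr' (f ω)).symm.trans (by simp only [real_inner_comm])
  rw [hsum]
  exact memLp_finsetSum _ fun i _ => (memLp_top_const (b i)).smul (hf (b i))

lemma integral_norm_sq_le_of_forall_hasSubgaussianMGF [IsProbabilityMeasure ρ] {c : ℝ≥0}
    (hf : ∀ v, HasSubgaussianMGF (fun ω => ⟪f ω, v⟫) (c * ‖v‖₊ ^ 2) ρ) :
    ∫ ω, ‖f ω‖ ^ 2 ∂ρ ≤ Module.finrank ℝ E * c := by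
  let b := stdOrthonormalBasis ℝ E
  calc ∫ ω, ‖f ω‖ ^ 2 ∂ρ = ∑ i, ∫ ω, ⟪f ω, b i⟫ ^ 2 ∂ρ := by
        simp_rw [← b.sum_sq_inner_left]
        exact integral_finsetSum _ fun i _ => ((hf (b i)).memLp 2).integrable_sq
    _ ≤ ∑ _i : Fin (Module.finrank ℝ E), (c : ℝ) :=
        Finset.sum_le_sum fun i _ => by
          simpa using integral_sq_le_of_hasSubgaussianMGF (hf (b i))
    _ = Module.finrank ℝ E * c := by simp

end SubGaussian

section LogSmooth

open ProbabilityTheory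
open scoped Gradient RealInnerProductSpace NNReal

variable {E : Type*} [NormedAddCommGroup E] [InnerProductSpace ℝ E] [FiniteDimensional ℝ E]
  [MeasurableSpace E] [BorelSpace E]

/-- The measure `μ` is `K`-log-smooth with log-density `φ`: it has density `exp φ` with respect to
Lebesgue measure, and its score `∇ φ` is `K`-Lipschitz. -/
structure IsLogSmooth (φ : E → ℝ) (K : ℝ≥0) (μ : Measure E) : Prop where
  differentiable : Differentiable ℝ φ
  lipschitzWith_gradient : LipschitzWith K (∇ φ)
  withDensity_exp : volume.withDensity (fun x => ENNReal.ofReal (exp (φ x))) = μ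

lemma isLogSmooth_log {p : E → ℝ} {K : ℝ≥0} {μ : Measure E} [NeZero μ]
    (hp : Differentiable ℝ p) (hs : LipschitzWith K (∇ fun z => Real.log (p z)))
    (hμ : volume.withDensity (fun x => ENNReal.ofReal (p x)) = μ) :
    IsLogSmooth (fun z => Real.log (p z)) K μ := by
  obtain ⟨x, hx⟩ : ∃ x, 0 < p x := by
    by_contra! hneg
    have hzero : μ = 0 := by
      simp only [← hμ, ENNReal.ofReal_of_nonpos (hneg _), withDensity_const, zero_smul]
    exact NeZero.ne μ hzero
  have hpos := pos_of_continuous_gradient_log hp hs.continuous hx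
  exact ⟨fun y => (hp y).log (hpos y).ne', hs, by simpa only [exp_log (hpos _)] using hμ⟩

namespace IsLogSmooth

variable {φ : E → ℝ} {K : ℝ≥0} {μ : Measure E}

lemma continuous (h : IsLogSmooth φ K μ) : Continuous φ := h.differentiable.continuous

lemma continuous_gradient (h : IsLogSmooth φ K μ) : Continuous (∇ φ) :=
  h.lipschitzWith_gradient.continuous

lemma withDensity_exp_sub (h : IsLogSmooth φ K μ) (v : E) :
    μ.withDensity (fun x => ENNReal.ofReal (exp (φ (x + v) - φ x))) = μ.map (fun x => x - v) := by
  have hφ : Measurable φ := h.continuous.measurable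
  refine Measure.ext_of_lintegral _ fun f hf => ?_
  rw [lintegral_map hf (by fun_prop), lintegral_withDensity_eq_lintegral_mul _ (by fun_prop) hf,
    ← h.withDensity_exp, lintegral_withDensity_eq_lintegral_mul _ (by fun_prop) (by fun_prop),
    lintegral_withDensity_eq_lintegral_mul _ (by fun_prop)
      (show Measurable fun x => f (x - v) by fun_prop)]
  conv_rhs => rw [← lintegral_add_right_eq_self _ v]
  refine lintegral_congr fun x => ?_
  simp only [Pi.mul_apply, add_sub_cancel_right, ← mul_assoc]
  rw [← ENNReal.ofReal_mul (exp_nonneg _), ← exp_add, add_sub_cancel]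

variable [IsProbabilityMeasure μ]

lemma integral_exp_sub (h : IsLogSmooth φ K μ) (v : E) :
    ∫ x, exp (φ (x + v) - φ x) ∂μ = 1 := by
  have hφ : Measurable φ := h.continuous.measurable
  have hmap : IsProbabilityMeasure (μ.map fun x => x - v) :=
    Measure.isProbabilityMeasure_map (by fun_prop)
  calc ∫ x, exp (φ (x + v) - φ x) ∂μ
      = ∫ _, (1 : ℝ) ∂μ.withDensity fun x => ENNReal.ofReal (exp (φ (x + v) - φ x)) := by
        rw [integral_withDensity_eq_integral_toReal_smul (by fun_prop) (by simp)]
        simp [exp_nonneg]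
    _ = 1 := by simp [h.withDensity_exp_sub v]

lemma hasSubgaussianMGF_inner_gradient (h : IsLogSmooth φ K μ) (v : E) :
    HasSubgaussianMGF (fun x => ⟪∇ φ x, v⟫) (K * ‖v‖₊ ^ 2) μ := by
  have hle (t : ℝ) (x : E) : exp (t * ⟪∇ φ x, v⟫) ≤
      exp (K * ‖v‖ ^ 2 * t ^ 2 / 2) * exp (φ (x + t • v) - φ x) := by
    rw [← exp_add, exp_le_exp]
    have hsmooth := neg_le_of_abs_le
      (abs_sub_sub_inner_gradient_le h.differentiable h.lipschitzWith_gradient x (t • v))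
    rw [real_inner_smul_right, norm_smul, mul_pow, norm_eq_abs, sq_abs] at hsmooth
    linarith
  have hint (t : ℝ) : Integrable
      (fun x => exp (K * ‖v‖ ^ 2 * t ^ 2 / 2) * exp (φ (x + t • v) - φ x)) μ :=
    (integrable_of_integral_eq_one (h.integral_exp_sub (t • v))).const_mul _
  have hexp (t : ℝ) : Integrable (fun x => exp (t * ⟪∇ φ x, v⟫)) μ := by
    have := h.continuous_gradient
    refine (hint t).mono' (Continuous.aestronglyMeasurable (by fun_prop)) (.of_forall fun x => ?_)
    simpa using hle t x
  refine ⟨hexp, fun t => ?_⟩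
  calc mgf (fun x => ⟪∇ φ x, v⟫) μ t
      ≤ ∫ x, exp (K * ‖v‖ ^ 2 * t ^ 2 / 2) * exp (φ (x + t • v) - φ x) ∂μ :=
        integral_mono (hexp t) (hint t) (hle t)
    _ = exp (↑(K * ‖v‖₊ ^ 2) * t ^ 2 / 2) := by
        rw [integral_const_mul, h.integral_exp_sub, mul_one]
        simp

lemma memLp_gradient (h : IsLogSmooth φ K μ) : MemLp (∇ φ) 2 μ :=
  memLp_of_forall_memLp_inner fun v => (h.hasSubgaussianMGF_inner_gradient v).memLp 2

lemma integral_norm_gradient_sq_le (h : IsLogSmooth φ K μ) :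
    ∫ x, ‖∇ φ x‖ ^ 2 ∂μ ≤ Module.finrank ℝ E * K :=
  integral_norm_sq_le_of_forall_hasSubgaussianMGF h.hasSubgaussianMGF_inner_gradient

end IsLogSmooth

lemma IsLogSmooth.hasDerivAt_integral_mul_exp_sub {φ : E → ℝ} {K : ℝ≥0} {μ : Measure E}
    [IsProbabilityMeasure μ] (h : IsLogSmooth φ K μ) {Ω : Type*} [MeasurableSpace Ω]
    {ρ : Measure Ω} {X : Ω → E} (hX : MeasurePreserving X ρ μ) {G : Ω → ℝ} (hG : MemLp G 2 ρ)
    (v : E) :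
    HasDerivAt (fun r : ℝ => ∫ ω, G ω * exp (φ (X ω + r • v) - φ (X ω)) ∂ρ)
      (∫ ω, G ω * ⟪∇ φ (X ω), v⟫ ∂ρ) 0 := by
  have hφ := h.continuous.measurable
  have hs := h.continuous_gradient.measurable
  have hXm := hX.measurable
  obtain rfl := hX.map_eq
  have := Measure.isProbabilityMeasure_of_map (μ := ρ) X
  have hsub : HasSubgaussianMGF (fun ω => ⟪∇ φ (X ω), v⟫) (K * ‖v‖₊ ^ 2) ρ :=
    HasSubgaussianMGF.of_map hXm.aemeasurable (h.hasSubgaussianMGF_inner_gradient v)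
  have hdom : MemLp (fun ω => exp (2 * (|⟪∇ φ (X ω), v⟫| + K * ‖v‖ ^ 2))) 2 ρ := by
    rw [memLp_two_iff_integrable_sq (by fun_prop : Measurable _).aestronglyMeasurable]
    convert (integrable_exp_mul_abs (hsub.integrable_exp_mul 4)
      (hsub.integrable_exp_mul (-4))).mul_const (exp (4 * (K * ‖v‖ ^ 2))) using 2 with ω
    rw [← exp_nat_mul, ← exp_add]
    push_cast
    ring_nf
  have hline (r : ℝ) (ω : Ω) :
      HasDerivAt (fun r : ℝ => G ω * exp (φ (X ω + r • v) - φ (X ω)))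
        (G ω * (exp (φ (X ω + r • v) - φ (X ω)) * ⟪∇ φ (X ω + r • v), v⟫)) r :=
    ((hasDerivAt_comp_line (h.differentiable _)).sub_const _).exp.const_mul _
  refine (hasDerivAt_integral_of_dominated_loc_of_deriv_le (𝕜 := ℝ)
    (Metric.closedBall_mem_nhds 0 one_pos) (.of_forall fun r => ?_) ?_ ?_
    (.of_forall fun ω r hr => ?_) (hG.norm.integrable_mul hdom)
    (.of_forall fun ω r _ => hline r ω)).2.congr_deriv ?_
  · exact hG.aestronglyMeasurable.mul (by fun_prop)
  · simpa using hG.integrable one_le_two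
  · exact hG.aestronglyMeasurable.mul (by fun_prop)
  · rw [norm_mul]
    exact mul_le_mul_of_nonneg_left (abs_exp_sub_mul_inner_gradient_le h.differentiable
      h.lipschitzWith_gradient _ _ (by simpa using hr)) (norm_nonneg _)
  · simp

end LogSmooth

section Channel

open ProbabilityTheory
open scoped Gradient RealInnerProductSpace NNReal

variable {E : Type*} [NormedAddCommGroup E] [InnerProductSpace ℝ E]

lemma integrable_inner_of_memLp_two {Ω : Type*} [MeasurableSpace Ω] {ρ : Measure Ω}
    {f g : Ω → E} (hf : MemLp f 2 ρ) (hg : MemLp g 2 ρ) :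
    Integrable (fun ω => ⟪f ω, g ω⟫) ρ :=
  (hf.norm.integrable_mul hg.norm).mono (hf.1.inner hg.1)
    (.of_forall fun ω => by simpa using abs_real_inner_le_norm (f ω) (g ω))

/-- The noisy observation `a X + b W` of a signal `X` with noise `W`, as a function of the pair
`(X, W)`. -/
def channel (a b : ℝ) (z : E × E) : E := a • z.1 + b • z.2

lemma norm_gradient_sub_rescaled_channel_le [CompleteSpace E] {φ : E → ℝ} {K : ℝ≥0}
    {a b : ℝ} (hφ : LipschitzWith K (∇ φ)) (ha : a ≠ 0) (z : E × E) :
    ‖∇ φ z.1 - ∇ φ (a⁻¹ • channel a b z)‖ ≤ K * |b / a| * ‖z.2‖ := by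
  have hdiff : z.1 - a⁻¹ • channel a b z = -((b / a) • z.2) := by
    rw [channel, smul_add, inv_smul_smul₀ ha, smul_smul, inv_mul_eq_div, sub_add_cancel_left]
  calc ‖∇ φ z.1 - ∇ φ (a⁻¹ • channel a b z)‖ ≤ K * ‖z.1 - a⁻¹ • channel a b z‖ :=
        hφ.norm_sub_le _ _
    _ = K * |b / a| * ‖z.2‖ := by rw [hdiff, norm_neg, norm_smul, norm_eq_abs, mul_assoc]

variable [FiniteDimensional ℝ E] [MeasurableSpace E] [BorelSpace E]

lemma measurable_channel (a b : ℝ) : Measurable (channel a b : E × E → E) := by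
  unfold channel
  fun_prop

variable {μ γ : Measure E} {a b : ℝ} {φ ψ : E → ℝ} {K K' : ℝ≥0}

lemma map_channel_withDensity_exp_sub [SFinite μ] [SFinite γ] (hφ : IsLogSmooth φ K μ)
    (hψ : IsLogSmooth ψ K' ((μ.prod γ).map (channel a b))) (v : E) :
    ((μ.prod γ).withDensity fun z => ENNReal.ofReal (exp (φ (z.1 + v) - φ z.1))).map
        (channel a b) =
      ((μ.prod γ).map (channel a b)).withDensity
        fun y => ENNReal.ofReal (exp (ψ (y + a • v) - ψ y)) := by
  have hφm := hφ.continuous.measurable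
  have hY : Measurable (channel a b : E × E → E) := measurable_channel a b
  have hcomm : channel a b ∘ Prod.map (fun x => x - v) id = (fun y => y - a • v) ∘ channel a b := by
    funext z
    simp only [channel, Function.comp, Prod.map, id, smul_sub]
    abel
  rw [hψ.withDensity_exp_sub, Measure.map_map (by fun_prop) hY, ← hcomm,
    ← Measure.map_map hY (by fun_prop), ← Measure.map_prod_map _ _ (by fun_prop) measurable_id,
    Measure.map_id, ← hφ.withDensity_exp_sub v, prod_withDensity_left (by fun_prop)]

lemma integral_channel_mul_exp_sub [SFinite μ] [SFinite γ] (hφ : IsLogSmooth φ K μ)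
    (hψ : IsLogSmooth ψ K' ((μ.prod γ).map (channel a b))) {g : E → ℝ} (hg : Measurable g)
    (v : E) :
    ∫ z, g (channel a b z) * exp (φ (z.1 + v) - φ z.1) ∂μ.prod γ =
      ∫ z, g (channel a b z) * exp (ψ (channel a b z + a • v) - ψ (channel a b z)) ∂μ.prod γ := by
  have hφm := hφ.continuous.measurable
  have hψm := hψ.continuous.measurable
  have hY : Measurable (channel a b : E × E → E) := measurable_channel a b
  have hlaw := congrArg (fun m => ∫ y, g y ∂m) (map_channel_withDensity_exp_sub hφ hψ v)
  rw [integral_map hY.aemeasurable hg.aestronglyMeasurable,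
    integral_withDensity_eq_integral_toReal_smul (by fun_prop) (by simp),
    integral_withDensity_eq_integral_toReal_smul (by fun_prop) (by simp),
    integral_map hY.aemeasurable (by fun_prop : Measurable _).aestronglyMeasurable] at hlaw
  simpa only [ENNReal.toReal_ofReal (exp_nonneg _), smul_eq_mul, mul_comm] using hlaw

variable [IsProbabilityMeasure μ] [IsProbabilityMeasure γ]

instance : IsProbabilityMeasure ((μ.prod γ).map (channel a b)) :=
  Measure.isProbabilityMeasure_map (measurable_channel a b).aemeasurable

lemma integral_channel_mul_inner_gradient (hφ : IsLogSmooth φ K μ)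
    (hψ : IsLogSmooth ψ K' ((μ.prod γ).map (channel a b))) {g : E → ℝ} (hg : Measurable g)
    (hg2 : MemLp (fun z => g (channel a b z)) 2 (μ.prod γ)) (v : E) :
    ∫ z, g (channel a b z) * ⟪∇ φ z.1, v⟫ ∂μ.prod γ =
      ∫ z, g (channel a b z) * ⟪a • ∇ ψ (channel a b z), v⟫ ∂μ.prod γ := by
  have hinput := hφ.hasDerivAt_integral_mul_exp_sub measurePreserving_fst hg2 v
  have houtput := hψ.hasDerivAt_integral_mul_exp_sub
    ((measurable_channel a b).measurePreserving _) hg2 (a • v)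
  simp only [integral_channel_mul_exp_sub hφ hψ hg, smul_comm a] at hinput
  simpa only [real_inner_smul_left, real_inner_smul_right] using hinput.unique houtput

lemma memLp_gradient_fst (γ : Measure E) [IsProbabilityMeasure γ] (hφ : IsLogSmooth φ K μ) :
    MemLp (fun z : E × E => ∇ φ z.1) 2 (μ.prod γ) :=
  hφ.memLp_gradient.comp_measurePreserving measurePreserving_fst

lemma memLp_gradient_channel (hψ : IsLogSmooth ψ K' ((μ.prod γ).map (channel a b))) :
    MemLp (fun z => ∇ ψ (channel a b z)) 2 (μ.prod γ) :=
  hψ.memLp_gradient.comp_measurePreserving ((measurable_channel a b).measurePreserving _)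

lemma integral_inner_gradient_channel (hφ : IsLogSmooth φ K μ)
    (hψ : IsLogSmooth ψ K' ((μ.prod γ).map (channel a b))) {g : E → E} (hg : Measurable g)
    (hg2 : MemLp (fun z => g (channel a b z)) 2 (μ.prod γ)) :
    ∫ z, ⟪∇ φ z.1, g (channel a b z)⟫ ∂μ.prod γ =
      ∫ z, ⟪a • ∇ ψ (channel a b z), g (channel a b z)⟫ ∂μ.prod γ := by
  let e := stdOrthonormalBasis ℝ E
  have hsum (f : E × E → E) (hf : MemLp f 2 (μ.prod γ)) :
      ∫ z, ⟪f z, g (channel a b z)⟫ ∂μ.prod γ =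
        ∑ i, ∫ z, ⟪f z, e i⟫ * ⟪e i, g (channel a b z)⟫ ∂μ.prod γ := by
    rw [← integral_finsetSum _ fun i _ =>
      (hf.inner_const (e i)).integrable_mul (hg2.const_inner (e i))]
    simp only [e.sum_inner_mul_inner]
  rw [hsum _ (memLp_gradient_fst γ hφ),
    hsum (fun z => a • ∇ ψ (channel a b z)) ((memLp_gradient_channel hψ).const_smul a)]
  refine Finset.sum_congr rfl fun i _ => ?_
  simpa only [mul_comm] using
    integral_channel_mul_inner_gradient hφ hψ hg.const_inner (hg2.const_inner (e i)) (e i)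

lemma integral_inner_gradient_sub_channel_eq_zero (hφ : IsLogSmooth φ K μ)
    (hψ : IsLogSmooth ψ K' ((μ.prod γ).map (channel a b))) {g : E → E} (hg : Measurable g)
    (hg2 : MemLp (fun z => g (channel a b z)) 2 (μ.prod γ)) :
    ∫ z, ⟪∇ φ z.1 - a • ∇ ψ (channel a b z), g (channel a b z)⟫ ∂μ.prod γ = 0 := by
  have hψ2 : MemLp (fun z => a • ∇ ψ (channel a b z)) 2 (μ.prod γ) :=
    (memLp_gradient_channel hψ).const_smul a
  simp only [inner_sub_left]
  rw [integral_sub (integrable_inner_of_memLp_two (memLp_gradient_fst γ hφ) hg2)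
    (integrable_inner_of_memLp_two hψ2 hg2), sub_eq_zero]
  exact integral_inner_gradient_channel hφ hψ hg hg2

lemma memLp_gradient_rescaled_channel (hφ : IsLogSmooth φ K μ) (hγ : MemLp id 2 γ) (ha : a ≠ 0) :
    MemLp (fun z => ∇ φ (a⁻¹ • channel a b z)) 2 (μ.prod γ) := by
  have hY : Measurable (channel a b : E × E → E) := measurable_channel a b
  have hφm := hφ.continuous_gradient.measurable
  have hW : MemLp (fun z : E × E => K * |b / a| * ‖z.2‖) 2 (μ.prod γ) :=
    (hγ.comp_measurePreserving measurePreserving_snd).norm.const_mul _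
  have hsub : MemLp (fun z => ∇ φ z.1 - ∇ φ (a⁻¹ • channel a b z)) 2 (μ.prod γ) :=
    hW.mono' (by fun_prop : Measurable _).aestronglyMeasurable
      (.of_forall (norm_gradient_sub_rescaled_channel_le hφ.lipschitzWith_gradient ha))
  simpa [Pi.sub_def] using (memLp_gradient_fst γ hφ).sub hsub

end Channel

section ScoreContinuity

open ProbabilityTheory
open scoped Gradient RealInnerProductSpace NNReal

lemma norm_sub_sq_le_add_sub_inner {H : Type*} [NormedAddCommGroup H] [InnerProductSpace ℝ H]
    (A S F : H) (a : ℝ) :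
    ‖A - S‖ ^ 2 ≤ ‖A - F‖ ^ 2 + (1 - a) ^ 2 * ‖S‖ ^ 2 - 2 * ⟪A - a • S, S - F⟫ := by
  have hS : A - S = (A - a • S) - (1 - a) • S := by module
  have hF : A - F = (A - a • S) + (a • S - F) := by module
  have hSF : S - F = (1 - a) • S + (a • S - F) := by module
  have hsq : ‖(1 - a) • S‖ ^ 2 = (1 - a) ^ 2 * ‖S‖ ^ 2 := by
    rw [norm_smul, mul_pow, norm_eq_abs, sq_abs]
  rw [hS, hF, hSF, norm_sub_sq_real, norm_add_sq_real, hsq, inner_add_right]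
  linarith [sq_nonneg ‖a • S - F‖]

variable {E : Type*} [NormedAddCommGroup E] [InnerProductSpace ℝ E] [FiniteDimensional ℝ E]
  [MeasurableSpace E] [BorelSpace E] {μ γ : Measure E} [IsProbabilityMeasure μ]
  [IsProbabilityMeasure γ] {a b : ℝ} {φ ψ : E → ℝ} {K K' : ℝ≥0}

theorem integral_norm_gradient_sub_channel_sq_le (hφ : IsLogSmooth φ K μ)
    (hψ : IsLogSmooth ψ K' ((μ.prod γ).map (channel a b))) (hγ : MemLp id 2 γ) (ha : a ≠ 0) :
    ∫ z, ‖∇ φ z.1 - ∇ ψ (channel a b z)‖ ^ 2 ∂μ.prod γ ≤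
      (K * |b / a|) ^ 2 * ∫ w, ‖w‖ ^ 2 ∂γ +
        (1 - a) ^ 2 * ∫ y, ‖∇ ψ y‖ ^ 2 ∂(μ.prod γ).map (channel a b) := by
  have hφm := hφ.continuous_gradient.measurable
  have hψm := hψ.continuous_gradient.measurable
  have hW : MemLp (fun z : E × E => z.2) 2 (μ.prod γ) :=
    hγ.comp_measurePreserving measurePreserving_snd
  have hA := memLp_gradient_fst γ hφ
  have hS := memLp_gradient_channel hψ
  have hD : MemLp (fun z => ∇ φ z.1 - a • ∇ ψ (channel a b z)) 2 (μ.prod γ) :=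
    hA.sub (hS.const_smul a)
  have hSF : MemLp (fun z => ∇ ψ (channel a b z) - ∇ φ (a⁻¹ • channel a b z)) 2 (μ.prod γ) :=
    hS.sub (memLp_gradient_rescaled_channel hφ hγ ha)
  have hnoise : Integrable (fun z : E × E => (K * |b / a|) ^ 2 * ‖z.2‖ ^ 2) (μ.prod γ) :=
    hW.norm.integrable_sq.const_mul _
  have hscore : Integrable (fun z => (1 - a) ^ 2 * ‖∇ ψ (channel a b z)‖ ^ 2) (μ.prod γ) :=
    hS.norm.integrable_sq.const_mul _
  have hinner := integrable_inner_of_memLp_two hD hSF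
  calc ∫ z, ‖∇ φ z.1 - ∇ ψ (channel a b z)‖ ^ 2 ∂μ.prod γ
      ≤ ∫ z, ((K * |b / a|) ^ 2 * ‖z.2‖ ^ 2 + (1 - a) ^ 2 * ‖∇ ψ (channel a b z)‖ ^ 2 -
          2 * ⟪∇ φ z.1 - a • ∇ ψ (channel a b z),
            ∇ ψ (channel a b z) - ∇ φ (a⁻¹ • channel a b z)⟫) ∂μ.prod γ := by
        refine integral_mono (hA.sub hS).norm.integrable_sq
          ((hnoise.fun_add hscore).sub (hinner.const_mul 2)) fun z => ?_
        refine (norm_sub_sq_le_add_sub_inner _ _ (∇ φ (a⁻¹ • channel a b z)) a).trans ?_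
        rw [← mul_pow (K * |b / a|)]
        gcongr
        exact norm_gradient_sub_rescaled_channel_le hφ.lipschitzWith_gradient ha z
    _ = (K * |b / a|) ^ 2 * ∫ z, ‖z.2‖ ^ 2 ∂μ.prod γ +
          (1 - a) ^ 2 * ∫ z, ‖∇ ψ (channel a b z)‖ ^ 2 ∂μ.prod γ := by
        rw [integral_sub (hnoise.fun_add hscore) (hinner.const_mul 2), integral_add hnoise hscore,
          integral_const_mul, integral_const_mul, integral_const_mul,
          integral_inner_gradient_sub_channel_eq_zero hφ hψ
            (g := fun y => ∇ ψ y - ∇ φ (a⁻¹ • y)) (by fun_prop) hSF, mul_zero, sub_zero]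
    _ = (K * |b / a|) ^ 2 * ∫ w, ‖w‖ ^ 2 ∂γ +
          (1 - a) ^ 2 * ∫ y, ‖∇ ψ y‖ ^ 2 ∂(μ.prod γ).map (channel a b) := by
        rw [integral_map (measurable_channel a b).aemeasurable
          (by fun_prop : Measurable _).aestronglyMeasurable,
          integral_fun_snd (fun w : E => ‖w‖ ^ 2), probReal_univ, one_smul]

end ScoreContinuity

section Gaussian

open ProbabilityTheory
open scoped RealInnerProductSpace

variable {E : Type*} [NormedAddCommGroup E] [InnerProductSpace ℝ E] [FiniteDimensional ℝ E]
  [MeasurableSpace E] [BorelSpace E]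

lemma integral_norm_sq_stdGaussian :
    ∫ x, ‖x‖ ^ 2 ∂stdGaussian E = Module.finrank ℝ E := by
  let b := stdOrthonormalBasis ℝ E
  have hcoord (i : Fin (Module.finrank ℝ E)) : ∫ x, ⟪b i, x⟫ ^ 2 ∂stdGaussian E = 1 := by
    have hvar := variance_dual_stdGaussian (innerSL ℝ (b i))
    rw [variance_of_integral_eq_zero (by fun_prop) (integral_strongDual_stdGaussian _)] at hvar
    simpa using hvar
  simp_rw [← b.sum_sq_inner_right]
  rw [integral_finsetSum]
  · simp [hcoord]
  · exact fun i _ => (IsGaussian.memLp_two_id.const_inner (b i)).integrable_sq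

lemma charFun_map_channel (μ ν : Measure E) [IsFiniteMeasure μ] [IsFiniteMeasure ν]
    (a b : ℝ) (t : E) :
    charFun ((μ.prod ν).map (channel a b)) t = charFun μ (a • t) * charFun ν (b • t) := by
  have hconv : (μ.prod ν).map (channel a b) = (μ.map (a • ·)).conv (ν.map (b • ·)) := by
    rw [Measure.conv, Measure.map_prod_map _ _ (by fun_prop) (by fun_prop),
      Measure.map_map (by fun_prop) (by fun_prop)]
    rfl
  rw [hconv, charFun_conv, charFun_map_smul, charFun_map_smul]

lemma map_channel_map_channel_stdGaussian (μ : Measure E) [IsFiniteMeasure μ]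
    {a₁ b₁ a₂ b₂ b : ℝ} (hb : a₂ ^ 2 * b₁ ^ 2 + b₂ ^ 2 = b ^ 2) :
    (((μ.prod (stdGaussian E)).map (channel a₁ b₁)).prod (stdGaussian E)).map (channel a₂ b₂) =
      (μ.prod (stdGaussian E)).map (channel (a₁ * a₂) b) := by
  refine Measure.ext_of_charFun (funext fun t => ?_)
  simp only [charFun_map_channel, charFun_stdGaussian, smul_smul, norm_smul, mul_assoc,
    ← Complex.exp_add]
  congr 2
  simp only [Complex.ofReal_mul, mul_pow, ← Complex.ofReal_pow, norm_eq_abs, sq_abs, ← hb]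
  push_cast
  ring

lemma integral_cexp_inner_mul_exp_neg_norm_sq (t : E) :
    ∫ x, (exp (-‖x‖ ^ 2 / 2) : ℂ) * Complex.exp (⟪x, t⟫ * Complex.I) =
      (2 * π) ^ (Module.finrank ℝ E / 2 : ℂ) * Complex.exp (-‖t‖ ^ 2 / 2) := by
  have h := GaussianFourier.integral_cexp_neg_mul_sq_norm_add (V := E) (b := 1 / 2)
    (by norm_num) Complex.I t
  rw [Complex.I_sq, show (π : ℂ) / (1 / 2) = 2 * π by ring] at h
  convert h using 3 with x
  · rw [Complex.ofReal_exp, ← Complex.exp_add, real_inner_comm]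
    congr 1
    push_cast
    ring
  · ring

lemma stdGauss_eq_stdGaussian (d : ℕ) : stdGauss d = stdGaussian (Vec d) := by
  have hpos (x : Vec d) : 0 ≤ gaussDensity d 0 1 x := by
    unfold gaussDensity
    positivity
  have hmeas : Measurable (gaussDensity d 0 1) := by
    unfold gaussDensity
    fun_prop
  have hcharFun (t : Vec d) : charFun (stdGauss d) t = Complex.exp (-‖t‖ ^ 2 / 2) := by
    have hnorm : (((2 * π) ^ (-(d : ℝ) / 2) : ℝ) : ℂ) * (2 * π) ^ (d / 2 : ℂ) = 1 := by
      rw [Complex.ofReal_cpow (by positivity)]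
      push_cast
      rw [← Complex.cpow_add _ _ (by simp [pi_ne_zero]), neg_div, neg_add_cancel, Complex.cpow_zero]
    rw [charFun_apply, stdGauss, gaussMeasure,
      integral_withDensity_eq_integral_toReal_smul (by fun_prop) (by simp)]
    simp_rw [ENNReal.toReal_ofReal (hpos _), gaussDensity, sub_zero, mul_one, Complex.real_smul,
      Complex.ofReal_mul, mul_assoc]
    rw [integral_const_mul, integral_cexp_inner_mul_exp_neg_norm_sq, finrank_euclideanSpace_fin,
      ← mul_assoc, hnorm, one_mul]
  have : IsFiniteMeasure (stdGauss d) := ⟨lt_top_iff_ne_top.2 fun htop => by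
    simpa [charFun_apply, measureReal_def, htop] using hcharFun 0⟩
  exact Measure.ext_of_charFun (funext fun t => by rw [hcharFun, charFun_stdGaussian])

end Gaussian

section ForwardProcess

open ProbabilityTheory
open scoped NNReal

variable {d : ℕ} {P : Measure (Vec d)} {g : ℝ → ℝ}

instance : IsProbabilityMeasure (stdGauss d) :=
  stdGauss_eq_stdGaussian d ▸ inferInstance

instance [IsProbabilityMeasure P] (t : ℝ) : IsProbabilityMeasure (forwardLaw d P g t) :=
  inferInstanceAs (IsProbabilityMeasure ((P.prod (stdGauss d)).map (channel _ _)))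

lemma Gvar_nonneg {t s : ℝ} (hts : t ≤ s) : 0 ≤ Gvar g t s :=
  intervalIntegral.integral_nonneg hts fun u _ => sq_nonneg (g u)

lemma Gvar_le_Gvar_left {r t s : ℝ} (hrt : r ≤ t) (hts : t ≤ s)
    (hg : IntervalIntegrable (fun u => g u ^ 2) volume r s) : Gvar g t s ≤ Gvar g r s :=
  intervalIntegral.integral_mono_interval hrt hts le_rfl (.of_forall fun u => sq_nonneg (g u)) hg

lemma alphaF_mul_alphaF {r t s : ℝ} (hrt : IntervalIntegrable (fun u => g u ^ 2) volume r t)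
    (hts : IntervalIntegrable (fun u => g u ^ 2) volume t s) :
    alphaF g r t * alphaF g t s = alphaF g r s := by
  rw [alphaF, alphaF, alphaF, ← exp_add, Gvar, Gvar, Gvar,
    ← intervalIntegral.integral_add_adjacent_intervals hrt hts]
  ring_nf

lemma alphaF_sq (t s : ℝ) : alphaF g t s ^ 2 = exp (-Gvar g t s) := by
  rw [alphaF, ← exp_nat_mul]
  ring_nf

lemma sigmaSq_eq (t : ℝ) : sigmaSq g t = 1 - alphaF g 0 t ^ 2 := by
  rw [alphaF_sq, sigmaSq]

lemma alphaF_sq_le_one {t s : ℝ} (hts : t ≤ s) : alphaF g t s ^ 2 ≤ 1 := by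
  rw [alphaF_sq]
  exact exp_le_one_iff.2 (neg_nonpos.2 (Gvar_nonneg hts))

lemma sq_noise_div_alphaF {t s : ℝ} (hts : t ≤ s) :
    (√(1 - alphaF g t s ^ 2) / alphaF g t s) ^ 2 = exp (Gvar g t s) - 1 := by
  rw [div_pow, sq_sqrt (sub_nonneg.2 (alphaF_sq_le_one hts)), alphaF_sq, sub_div,
    div_self (exp_pos _).ne', exp_neg, one_div, inv_inv]

lemma map_channel_forwardLaw [IsProbabilityMeasure P] {t s : ℝ} (ht : 0 ≤ t) (hts : t ≤ s)
    (hg : IntervalIntegrable (fun u => g u ^ 2) volume 0 s) :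
    ((forwardLaw d P g t).prod (stdGauss d)).map
        (channel (alphaF g t s) √(1 - alphaF g t s ^ 2)) = forwardLaw d P g s := by
  have hα : alphaF g 0 t * alphaF g t s = alphaF g 0 s :=
    alphaF_mul_alphaF (hg.mono_set (Set.uIcc_subset_uIcc_left (Set.mem_uIcc_of_le ht hts)))
      (hg.mono_set (Set.uIcc_subset_uIcc_right (Set.mem_uIcc_of_le ht hts)))
  have hvar : alphaF g t s ^ 2 * √(sigmaSq g t) ^ 2 + √(1 - alphaF g t s ^ 2) ^ 2 =
      √(sigmaSq g s) ^ 2 := by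
    rw [sigmaSq_eq, sigmaSq_eq, sq_sqrt (sub_nonneg.2 (alphaF_sq_le_one ht)),
      sq_sqrt (sub_nonneg.2 (alphaF_sq_le_one hts)),
      sq_sqrt (sub_nonneg.2 (alphaF_sq_le_one (ht.trans hts))), ← hα]
    ring
  have := map_channel_map_channel_stdGaussian P (a₁ := alphaF g 0 t) hvar
  rwa [hα, ← stdGauss_eq_stdGaussian] at this

lemma measurePreserving_xt_noise (P : Measure (Vec d)) [IsProbabilityMeasure P] (g : ℝ → ℝ)
    (t : ℝ) :
    MeasurePreserving (fun ω => (xt d g t ω, ω.2.2)) (coupleMeasure d P)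
      ((forwardLaw d P g t).prod (stdGauss d)) :=
  (((measurable_channel _ _).measurePreserving _).prod (.id _)).comp
    ((measurePreserving_prodAssoc P (stdGauss d) (stdGauss d)).symm _)

theorem statement12_general [IsProbabilityMeasure P] {t s : ℝ} (ht : 0 ≤ t) (hts : t ≤ s)
    (hg : IntervalIntegrable (fun u => g u ^ 2) volume 0 s) {p q : Vec d → ℝ} {K K' : ℝ≥0}
    (hp : Differentiable ℝ p) (hpK : LipschitzWith K (scoreOf p))
    (hpt : volume.withDensity (fun x => ENNReal.ofReal (p x)) = forwardLaw d P g t)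
    (hq : Differentiable ℝ q) (hqK : LipschitzWith K' (scoreOf q))
    (hqs : volume.withDensity (fun x => ENNReal.ofReal (q x)) = forwardLaw d P g s) :
    ∫ ω, ‖scoreOf p (xt d g t ω) - scoreOf q (xts d g t s ω)‖ ^ 2 ∂coupleMeasure d P ≤
      d * (K ^ 2 * (exp (Gvar g t s) - 1) + K' * (1 - alphaF g t s) ^ 2) := by
  set a := alphaF g t s with ha
  set b := √(1 - a ^ 2) with hb
  have hφ := isLogSmooth_log hp hpK hpt
  have hψ := isLogSmooth_log hq hqK hqs
  rw [← map_channel_forwardLaw ht hts hg] at hψ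
  have hγ : MemLp id 2 (stdGauss d) := stdGauss_eq_stdGaussian d ▸ IsGaussian.memLp_two_id
  have hmeas : Measurable fun z : Vec d × Vec d =>
      ‖scoreOf p z.1 - scoreOf q (channel a b z)‖ ^ 2 :=
    ((hpK.continuous.measurable.comp measurable_fst).sub
      (hqK.continuous.measurable.comp (measurable_channel a b))).norm.pow_const 2
  calc ∫ ω, ‖scoreOf p (xt d g t ω) - scoreOf q (xts d g t s ω)‖ ^ 2 ∂coupleMeasure d P
      = ∫ z, ‖scoreOf p z.1 - scoreOf q (channel a b z)‖ ^ 2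
          ∂(forwardLaw d P g t).prod (stdGauss d) := by
        rw [← (measurePreserving_xt_noise P g t).map_eq,
          integral_map (measurePreserving_xt_noise P g t).aemeasurable hmeas.aestronglyMeasurable]
        rfl
    _ ≤ (K * |b / a|) ^ 2 * ∫ w, ‖w‖ ^ 2 ∂stdGauss d +
          (1 - a) ^ 2 * ∫ y, ‖scoreOf q y‖ ^ 2
            ∂((forwardLaw d P g t).prod (stdGauss d)).map (channel a b) :=
        integral_norm_gradient_sub_channel_sq_le hφ hψ hγ (exp_pos _).ne'
    _ ≤ (K * |b / a|) ^ 2 * d + (1 - a) ^ 2 * (d * K') := by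
        gcongr
        · rw [stdGauss_eq_stdGaussian, integral_norm_sq_stdGaussian, finrank_euclideanSpace_fin]
        · exact hψ.integral_norm_gradient_sq_le.trans_eq (by rw [finrank_euclideanSpace_fin])
    _ = d * (K ^ 2 * (exp (Gvar g t s) - 1) + K' * (1 - a) ^ 2) := by
        rw [mul_pow, sq_abs, hb, ha, sq_noise_div_alphaF hts]
        ring

lemma mul_exp_sub_one_add_mul_one_sub_exp_sq_le {L G : ℝ} (hL : 1 ≤ L) (hG : 0 ≤ G)
    (hG1 : G ≤ 1) :
    L ^ 2 * (exp G - 1) + L * (1 - exp (-G / 2)) ^ 2 ≤ 3 * L ^ 2 * G := by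
  have hexp : exp G - 1 ≤ 2 * G := by
    have := abs_exp_sub_one_le (abs_le.2 ⟨by linarith, hG1⟩)
    rw [abs_of_nonneg hG] at this
    exact (le_abs_self _).trans this
  have hsq : (1 - exp (-G / 2)) ^ 2 ≤ G := by
    have hle : exp (-G / 2) ≤ 1 := exp_le_one_iff.2 (by linarith)
    have hge := add_one_le_exp (-G / 2)
    have := exp_pos (-G / 2)
    nlinarith
  calc L ^ 2 * (exp G - 1) + L * (1 - exp (-G / 2)) ^ 2 ≤ L ^ 2 * (2 * G) + L ^ 2 * G := by
        gcongr
        exact le_self_pow₀ hL two_ne_zero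
    _ = 3 * L ^ 2 * G := by ring

lemma integral_norm_score_sub_sq_le_three_mul [IsProbabilityMeasure P] {t s : ℝ} (ht : 0 ≤ t)
    (hts : t ≤ s) (hg : IntervalIntegrable (fun u => g u ^ 2) volume 0 s) (hG : Gvar g t s ≤ 1)
    {p q : Vec d → ℝ} {K : ℝ≥0} (hK : 1 ≤ K)
    (hp : Differentiable ℝ p) (hpK : LipschitzWith K (scoreOf p))
    (hpt : volume.withDensity (fun x => ENNReal.ofReal (p x)) = forwardLaw d P g t)
    (hq : Differentiable ℝ q) (hqK : LipschitzWith K (scoreOf q))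
    (hqs : volume.withDensity (fun x => ENNReal.ofReal (q x)) = forwardLaw d P g s) :
    ∫ ω, ‖scoreOf p (xt d g t ω) - scoreOf q (xts d g t s ω)‖ ^ 2 ∂coupleMeasure d P ≤
      3 * d * K ^ 2 * Gvar g t s :=
  calc ∫ ω, ‖scoreOf p (xt d g t ω) - scoreOf q (xts d g t s ω)‖ ^ 2 ∂coupleMeasure d P
      ≤ d * (K ^ 2 * (exp (Gvar g t s) - 1) + K * (1 - alphaF g t s) ^ 2) :=
        statement12_general ht hts hg hp hpK hpt hq hqK hqs
    _ ≤ d * (3 * K ^ 2 * Gvar g t s) := by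
        gcongr
        exact mul_exp_sub_one_add_mul_one_sub_exp_sq_le (mod_cast hK) (Gvar_nonneg hts) hG
    _ = 3 * d * K ^ 2 * Gvar g t s := by ring

lemma Icc_grid_subset {N k : ℕ} {τ : ℕ → ℝ} (hτ : ∀ j < N, τ j < τ (j + 1)) (hk : k ≤ N) :
    Set.Icc (τ (k - 1)) (τ k) ⊆ Set.Icc (τ 0) (τ N) := by
  have hmono : MonotoneOn τ (Set.Iic N) := (strictMonoOn_Iic_of_lt_succ hτ).monotoneOn
  exact Set.Icc_subset_Icc (hmono N.zero_le ((k.sub_le 1).trans hk) (k - 1).zero_le)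
    (hmono hk Set.self_mem_Iic hk)

end ForwardProcess

/-- Lemma `discrete-Lip`: discretization error of the score under a local
Lipschitz assumption on `∇log p_u` for `u` in one discretization interval. Here `pdens u`
is the density of the forward marginal `p_u`. -/
theorem statement12 :
    ∃ C : ℝ, 0 < C ∧
      ∀ (d N k : ℕ) (T L : ℝ) (P : Measure (Vec d)) (g : ℝ → ℝ) (tp : ℕ → ℝ)
        (pdens : ℝ → Vec d → ℝ),
        IsProbabilityMeasure P → 0 < N → 1 ≤ k → k ≤ N →
        ContinuousOn g (Set.Icc 0 T) → (∀ u ∈ Set.Ioc (0 : ℝ) T, 0 < g u) →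
        0 ≤ tp 0 → tp N = T → (∀ j < N, tp j < tp (j + 1)) →
        -- for every `u ∈ [t_{k−1}, t_k]`, `p_u` is a `C¹` density of the forward marginal
        -- with `∇log p_u` `L`-Lipschitz
        (∀ u ∈ Set.Icc (tp (k - 1)) (tp k),
          MeasureTheory.volume.withDensity (fun x => ENNReal.ofReal (pdens u x)) =
              forwardLaw d P g u ∧
            ContDiff ℝ 1 (pdens u) ∧
            LipschitzWith (Real.toNNReal L) (scoreOf (pdens u))) →
        1 ≤ L → Gvar g (tp (k - 1)) (tp k) ≤ 1 →
        ∀ t ∈ Set.Icc (tp (k - 1)) (tp k),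
          (∫ ω, ‖scoreOf (pdens t) (xt d g t ω) -
                scoreOf (pdens (tp k)) (xts d g t (tp k) ω)‖ ^ 2
              ∂(coupleMeasure d P)) ≤
            C * d * L ^ 2 * Gvar g t (tp k) := by
  refine ⟨3, by norm_num,
    fun d N k T L P g tp pdens _ _ _ hkN hg _ h0 hT hinc hdens hL hG t ht => ?_⟩
  have hcell : Set.Icc (tp (k - 1)) (tp k) ⊆ Set.Icc 0 T :=
    (Icc_grid_subset hinc hkN).trans (Set.Icc_subset_Icc h0 hT.le)
  have hleft := Set.left_mem_Icc.2 (ht.1.trans ht.2)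
  have hright := Set.right_mem_Icc.2 (ht.1.trans ht.2)
  have hint {a : ℝ} (ha : a ∈ Set.Icc 0 T) :
      IntervalIntegrable (fun u => g u ^ 2) volume a (tp k) :=
    ((hg.pow 2).mono (Set.uIcc_subset_Icc ha (hcell hright))).intervalIntegrable
  obtain ⟨hpt, hp, hpL⟩ := hdens t ht
  obtain ⟨hqs, hq, hqL⟩ := hdens (tp k) hright
  have h := integral_norm_score_sub_sq_le_three_mul (hcell ht).1 ht.2
    (hint (Set.left_mem_Icc.2 ((hcell ht).1.trans (hcell ht).2)))
    ((Gvar_le_Gvar_left ht.1 ht.2 (hint (hcell hleft))).trans hG) (one_le_toNNReal.2 hL)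
    (hp.differentiable one_ne_zero) hpL hpt (hq.differentiable one_ne_zero) hqL hqs
  rwa [coe_toNNReal L (zero_le_one.trans hL)] at h

end DiffusionKL
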